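/- arXiv:2601.22668 — 2 statements merged into one kernel-verified Lean document; each statement's English description precedes it below -/
import Mathlib

section
/- Let A ⊆ X be a closed C-contracting subset and let x, y ∈ X satisfy d(x,A) ≤ C and d(y,A) ≤ C. Then every geodesic segment from x to y is contained in the closed 2.5C-neighborhood of A. -/
/-!
Let `p` be a point of the geodesic with `d(p, A) > C`. By continuity of the distance to `A`, the
point `p` lies on a subsegment that stays at distance at least `C` from `A` and whose endpoints are
at distance exactly `C` from `A` (`exists_last_eq`, applied on both sides of `p`). By contraction
the projections of these endpoints are at most `C` apart, so the subsegment has length at most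
`C + C + C = 3C` (`length_le_of_contracting`). Hence `p` is within `1.5 C` of one of its endpoints
and within `2.5 C` of `A`.
-/

open Metric Set

/-- The nearest-point projection of a point `x` to a subset `A`. -/
def nearestProj {X : Type*} [MetricSpace X] (A : Set X) (x : X) : Set X :=
  {a ∈ A | dist x a = Metric.infDist x A}

/-- `f` restricted to `s ⊆ ℝ` is a unit-speed geodesic. -/
def IsGeodesicOn {X : Type*} [MetricSpace X] (f : ℝ → X) (s : Set ℝ) : Prop :=
  ∀ u ∈ s, ∀ v ∈ s, dist (f u) (f v) = |u - v|

/-- `S` is (the image of) a geodesic segment from `x` to `y`. -/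
def IsGeodSegment {X : Type*} [MetricSpace X] (S : Set X) (x y : X) : Prop :=
  ∃ (f : ℝ → X) (L : ℝ), 0 ≤ L ∧ IsGeodesicOn f (Set.Icc 0 L) ∧
    f 0 = x ∧ f L = y ∧ S = f '' Set.Icc 0 L

/-- `X` is a geodesic metric space: any two points are joined by a geodesic segment. -/
def GeodesicSpace (X : Type*) [MetricSpace X] : Prop :=
  ∀ x y : X, ∃ S : Set X, IsGeodSegment S x y

/-- `A` is a `C`-contracting subset: any geodesic segment at distance at least `C`
from `A` has nearest-point projection to `A` of diameter at most `C`. -/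
def Contracting {X : Type*} [MetricSpace X] (C : ℝ) (A : Set X) : Prop :=
  ∀ (S : Set X) (x y : X), IsGeodSegment S x y →
    (∀ p ∈ S, C ≤ Metric.infDist p A) →
    Metric.diam {a : X | ∃ p ∈ S, a ∈ nearestProj A p} ≤ C

/-- The point `w` is `K`-aligned with the geodesic `S` relative to the marked
endpoint `e` of `S`: the diameter of `π_S(w) ∪ {e}` is less than `K`.
For a segment `S` from `x` to `y`, the pair `(w, S)` being `K`-aligned is
`AlignedIn K w S x`, and the pair `(S, z)` being `K`-aligned is `AlignedIn K z S y`. -/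
def AlignedIn {X : Type*} [MetricSpace X] (K : ℝ) (w : X) (S : Set X) (e : X) : Prop :=
  Metric.diam (nearestProj S w ∪ {e}) < K

/-- The shadow `O_R(x,y)`: points `w` such that some geodesic segment from `x` to `w`
meets the open ball of radius `R` about `y`. -/
def Shadow {X : Type*} [MetricSpace X] (R : ℝ) (x y : X) : Set X :=
  {w | ∃ S : Set X, IsGeodSegment S x w ∧ ∃ p ∈ S, dist p y < R}

/-- The Gromov product `(z|w)_x`. -/
noncomputable def gromovProd {X : Type*} [MetricSpace X] (x z w : X) : ℝ :=
  (dist x z + dist x w - dist z w) / 2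

/-- `X` has `δ`-thin geodesic triangles. -/
def ThinTriangles (X : Type*) [MetricSpace X] (δ : ℝ) : Prop :=
  ∀ (x y z : X) (S₁ S₂ S₃ : Set X),
    IsGeodSegment S₁ x y → IsGeodSegment S₂ y z → IsGeodSegment S₃ x z →
    ∀ p ∈ S₃, Metric.infDist p (S₁ ∪ S₂) ≤ δ

/-- A subarc of a geodesic is a geodesic segment. -/
lemma IsGeodesicOn.subsegment {X : Type*} [MetricSpace X] {f : ℝ → X} {s : Set ℝ} {a b : ℝ}
    (hf : IsGeodesicOn f s) (hab : a ≤ b) (hs : Set.Icc a b ⊆ s) :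
    IsGeodSegment (f '' Set.Icc a b) (f a) (f b) := by
  refine ⟨fun r => f (a + r), b - a, by linarith, ?_, by simp, by simp, ?_⟩
  · intro u hu v hv
    have h := hf (a + u) (hs ⟨by linarith [hu.1], by linarith [hu.2]⟩)
      (a + v) (hs ⟨by linarith [hv.1], by linarith [hv.2]⟩)
    simpa using h
  · ext z
    constructor
    · rintro ⟨r, hr, rfl⟩
      exact ⟨r - a, ⟨by linarith [hr.1], by linarith [hr.2]⟩, by simp⟩
    · rintro ⟨r, hr, rfl⟩
      exact ⟨a + r, ⟨by linarith [hr.1], by linarith [hr.2]⟩, rfl⟩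

lemma IsGeodesicOn.continuousOn {X : Type*} [MetricSpace X] {f : ℝ → X} {s : Set ℝ}
    (hf : IsGeodesicOn f s) : ContinuousOn f s := by
  have h : LipschitzOnWith 1 f s := LipschitzOnWith.of_dist_le_mul fun u hu v hv => by
    rw [hf u hu v hv, Real.dist_eq]; simp
  exact h.continuousOn

/-- The last time at which `g` takes the value `C`; afterwards `g` stays above `C`. -/
lemma exists_last_eq {g : ℝ → ℝ} {u v C : ℝ} (huv : u ≤ v) (hg : ContinuousOn g (Set.Icc u v))
    (hu : g u ≤ C) (hv : C ≤ g v) :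
    ∃ a ∈ Set.Icc u v, g a = C ∧ ∀ s ∈ Set.Icc a v, C ≤ g s := by
  have hcomp : IsCompact (Set.Icc u v ∩ g ⁻¹' {C}) :=
    isCompact_Icc.of_isClosed_subset
      (hg.preimage_isClosed_of_isClosed isClosed_Icc isClosed_singleton) Set.inter_subset_left
  have hne : (Set.Icc u v ∩ g ⁻¹' {C}).Nonempty := by
    obtain ⟨r, hr, hrC⟩ := intermediate_value_Icc huv hg ⟨hu, hv⟩
    exact ⟨r, hr, hrC⟩
  obtain ⟨a, ⟨ha, haC⟩, hmax⟩ := hcomp.exists_isGreatest hne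
  have haC : g a = C := haC
  refine ⟨a, ha, haC, fun s hs => ?_⟩
  by_contra! hlt
  -- If `g s < C`, the value `C` is taken again after `s`, hence after `a`.
  obtain ⟨r, hr, hrC⟩ := intermediate_value_Icc hs.2
    (hg.mono (Set.Icc_subset_Icc_left (ha.1.trans hs.1))) ⟨hlt.le, hv⟩
  have hra : r ≤ a := hmax ⟨⟨ha.1.trans (hs.1.trans hr.1), hr.2⟩, hrC⟩
  have hsa : s = a := le_antisymm (hr.1.trans hra) hs.1
  rw [hsa, haC] at hlt
  exact lt_irrefl _ hlt

/-- A geodesic arc outside the `C`-neighborhood of `A` with endpoints at distance `C` from `A` is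
at most as long as the path through the projections of its endpoints. -/
lemma length_le_of_contracting {X : Type*} [MetricSpace X] [ProperSpace X] {C : ℝ} {A : Set X}
    (hA : IsClosed A) (hne : A.Nonempty) (hcon : Contracting C A) {f : ℝ → X} {s : Set ℝ}
    (hf : IsGeodesicOn f s) {a b : ℝ} (hab : a ≤ b) (hs : Set.Icc a b ⊆ s)
    (ha : Metric.infDist (f a) A = C) (hb : Metric.infDist (f b) A = C)
    (hfar : ∀ r ∈ Set.Icc a b, C ≤ Metric.infDist (f r) A) : b - a ≤ 3 * C := by
  have hdiam := hcon _ _ _ (hf.subsegment hab hs) (by rintro _ ⟨r, hr, rfl⟩; exact hfar r hr)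
  obtain ⟨p, hp, hpd⟩ := hA.exists_infDist_eq_dist hne (f a)
  obtain ⟨q, hq, hqd⟩ := hA.exists_infDist_eq_dist hne (f b)
  have hma : a ∈ Set.Icc a b := ⟨le_rfl, hab⟩
  have hmb : b ∈ Set.Icc a b := ⟨hab, le_rfl⟩
  -- Without boundedness the bound on `Metric.diam` would say nothing.
  have hbdd : Bornology.IsBounded
      {z : X | ∃ w ∈ f '' Set.Icc a b, z ∈ nearestProj A w} := by
    refine (Metric.isBounded_iff_subset_closedBall (f a)).2 ⟨C + 2 * (b - a), ?_⟩
    rintro z ⟨_, ⟨r, hr, rfl⟩, -, hz⟩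
    have h1 : Metric.infDist (f r) A ≤ Metric.infDist (f a) A + dist (f r) (f a) :=
      Metric.infDist_le_infDist_add_dist
    have h2 : dist (f r) (f a) ≤ b - a := by
      rw [hf r (hs hr) a (hs hma), abs_of_nonneg (by linarith [hr.1])]
      linarith [hr.2]
    have h3 := dist_triangle z (f r) (f a)
    rw [dist_comm z (f r)] at h3
    rw [Metric.mem_closedBall]
    linarith
  have hpq : dist p q ≤ C := (Metric.dist_le_diam_of_mem hbdd
    ⟨f a, ⟨a, hma, rfl⟩, hp, hpd.symm⟩ ⟨f b, ⟨b, hmb, rfl⟩, hq, hqd.symm⟩).trans hdiam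
  have hlen : dist (f a) (f b) = b - a := by
    rw [hf a (hs hma) b (hs hmb), abs_sub_comm, abs_of_nonneg (by linarith)]
  have h4 := dist_triangle4 (f a) p q (f b)
  rw [dist_comm q (f b)] at h4
  linarith

/-- a geodesic between two points `C`-close to a closed
`C`-contracting set stays in its `2.5 C`-neighborhood. -/
theorem stmt11 {X : Type*} [MetricSpace X] [ProperSpace X]
    (hX : GeodesicSpace X)
    (C : ℝ) (hC : 0 ≤ C)
    (A : Set X) (hA : IsClosed A) (hcon : Contracting C A)
    (x y : X) (hx : Metric.infDist x A ≤ C) (hy : Metric.infDist y A ≤ C)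
    (S : Set X) (hS : IsGeodSegment S x y) :
    ∀ p ∈ S, Metric.infDist p A ≤ 2.5 * C := by
  rcases A.eq_empty_or_nonempty with rfl | hne
  · intro p _
    rw [Metric.infDist_empty]
    positivity
  obtain ⟨f, L, hL, hf, rfl, rfl, rfl⟩ := hS
  rintro _ ⟨t, ht, rfl⟩
  rcases le_total (Metric.infDist (f t) A) C with hle | hge
  · linarith
  have hg : ContinuousOn (fun r => Metric.infDist (f r) A) (Set.Icc 0 L) :=
    (Metric.continuous_infDist_pt A).comp_continuousOn hf.continuousOn
  obtain ⟨a, ha, haC, hafar⟩ :=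
    exists_last_eq ht.1 (hg.mono (Set.Icc_subset_Icc_right ht.2)) hx hge
  -- The first time after `t` at distance `C` is the last one for the reversed parametrization.
  have hgneg : ContinuousOn (fun r => Metric.infDist (f (-r)) A) (Set.Icc (-L) (-t)) :=
    hg.comp continuous_neg.continuousOn
      fun r hr => ⟨by linarith [hr.2, ht.1], by linarith [hr.1]⟩
  obtain ⟨b, hb, hbC, hbfar⟩ := exists_last_eq (C := C) (neg_le_neg ht.2) hgneg
    (by simpa using hy) (by simpa using hge)
  have hlen : -b - a ≤ 3 * C := by
    refine length_le_of_contracting hA hne hcon hf (by linarith [ha.2, hb.2])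
      (Set.Icc_subset_Icc ha.1 (by linarith [hb.1])) haC hbC fun r hr => ?_
    rcases le_total r t with h | h
    · exact hafar r ⟨hr.1, h⟩
    · simpa using hbfar (-r) ⟨by linarith [hr.2], by linarith⟩
  have hnear : ∀ c ∈ Set.Icc 0 L, Metric.infDist (f c) A = C →
      Metric.infDist (f t) A ≤ C + |t - c| := fun c hc hcC => by
    rw [← hf t ht c hc, ← hcC]
    exact Metric.infDist_le_infDist_add_dist
  have h1 := hnear a ⟨ha.1, ha.2.trans ht.2⟩ haC
  have h2 := hnear (-b) ⟨by linarith [hb.2, ht.1], by linarith [hb.1]⟩ hbC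
  rw [abs_of_nonneg (by linarith [ha.2])] at h1
  rw [abs_of_nonpos (by linarith [hb.2])] at h2
  linarith
end

section
/- There exists C > 0, depending only on δ, c, and d(x₀, γ(0)), such that for every K > C there exists N ∈ ℕ with the following property: for every isometry h of X, every n ∈ ℕ, every choice of geodesic segments, and every z ∈ X, if the triple (x₀, h·[x₀, g^{n+2N} x₀], z) is K-aligned, then the triple (x₀, h·g^N·[x₀, g^n x₀], z) is C-aligned (here h·g^N·[x₀, g^n x₀] denotes the image of the geodesic segment [x₀, g^n x₀] under the isometry h∘g^N). -/
/-!
The orbit points `x₀, g^N x₀, g^(N+n) x₀, g^(n+2N) x₀` lie within `r + c` of the points of `γ` at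
times `0, Nτ, (N+n)τ, (n+2N)τ`, so their mutual distances are those of points in this order on a
line, up to an error bounded in terms of `r + c`.

In a space with `δ`-thin triangles, a nearest-point projection `a` of `w` to a geodesic `S` satisfies
`d(w,u) ≥ d(w,a) + d(a,u) - 9δ` for every `u ∈ S` (`dist_ge_of_nearest`), and a point `p` for which
`d(x,p) + d(p,y)` nearly equals `d(x,y)` lies near every geodesic from `x` to `y` (`exists_near`).
Hence, if `w` projects to `S = [x,y]` within `K` of `x`, and `p, q` are nearly in order along `S` with
`d(x,p)` larger than `K`, then passing from `w` to `q` nearly goes through `p`. Comparing with the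
projection `b` of `w` to `T = [p,q]`, for which both `d(w,p)` and `d(w,q)` nearly decompose through
`b`, gives a bound on `d(b,p)` independent of `K` (`near_endpoint`). The theorem takes `N` with `Nτ`
large compared to `K`, and uses this estimate once in each direction along `S`.
-/


open Metric Set

section Segments

variable {X : Type*} [MetricSpace X]

lemma IsGeodSegment.symm {S : Set X} {x y : X} (h : IsGeodSegment S x y) :
    IsGeodSegment S y x := by
  obtain ⟨f, L, hL, hf, h0, h1, rfl⟩ := h
  refine ⟨fun t => f (L - t), L, hL, ?_, by simpa using h1, by simpa using h0, ?_⟩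
  · intro u hu v hv
    have := hf (L - u) ⟨by linarith [hu.2], by linarith [hu.1]⟩
      (L - v) ⟨by linarith [hv.2], by linarith [hv.1]⟩
    rw [this, abs_sub_comm]
    congr 1
    ring
  · ext p
    constructor
    · rintro ⟨t, ht, rfl⟩
      exact ⟨L - t, ⟨by linarith [ht.2], by linarith [ht.1]⟩, by simp⟩
    · rintro ⟨t, ht, rfl⟩
      exact ⟨L - t, ⟨by linarith [ht.2], by linarith [ht.1]⟩, rfl⟩

lemma IsGeodSegment.image {S : Set X} {x y : X} (h : IsGeodSegment S x y) {φ : X → X}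
    (hφ : Isometry φ) : IsGeodSegment (φ '' S) (φ x) (φ y) := by
  obtain ⟨f, L, hL, hf, h0, h1, rfl⟩ := h
  refine ⟨φ ∘ f, L, hL, ?_, by simp [h0], by simp [h1], by rw [Set.image_comp]⟩
  intro u hu v hv
  simpa [hφ.dist_eq] using hf u hu v hv

lemma IsGeodSegment.isCompact {S : Set X} {x y : X} (h : IsGeodSegment S x y) :
    IsCompact S := by
  obtain ⟨f, L, hL, hf, h0, h1, rfl⟩ := h
  refine isCompact_Icc.image_of_continuousOn ?_
  have : LipschitzOnWith 1 f (Set.Icc 0 L) := by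
    refine LipschitzOnWith.of_dist_le_mul fun u hu v hv => ?_
    rw [hf u hu v hv, Real.dist_eq]
    simp
  exact this.continuousOn

lemma IsGeodSegment.left_mem {S : Set X} {x y : X} (h : IsGeodSegment S x y) : x ∈ S := by
  obtain ⟨f, L, hL, hf, h0, h1, rfl⟩ := h
  exact ⟨0, ⟨le_rfl, hL⟩, h0⟩

lemma IsGeodSegment.right_mem {S : Set X} {x y : X} (h : IsGeodSegment S x y) : y ∈ S :=
  h.symm.left_mem

lemma IsGeodSegment.dist_eq_sub {S : Set X} {x y a p : X} (h : IsGeodSegment S x y)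
    (ha : a ∈ S) (hp : p ∈ S) (hap : dist x a ≤ dist x p) :
    dist a p = dist x p - dist x a := by
  obtain ⟨f, L, hL, hf, rfl, h1, rfl⟩ := h
  obtain ⟨s, hs, rfl⟩ := ha
  obtain ⟨t, ht, rfl⟩ := hp
  have z : (0 : ℝ) ∈ Set.Icc 0 L := ⟨le_rfl, hL⟩
  rw [hf _ z _ hs, hf _ z _ ht, zero_sub, zero_sub, abs_neg, abs_neg, abs_of_nonneg hs.1,
    abs_of_nonneg ht.1] at *
  rw [hf _ hs _ ht, abs_sub_comm, abs_of_nonneg (by linarith)]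

lemma IsGeodSegment.dist_add {S : Set X} {x y a : X} (h : IsGeodSegment S x y)
    (ha : a ∈ S) : dist x a + dist a y = dist x y := by
  obtain ⟨f, L, hL, hf, rfl, rfl, rfl⟩ := h
  obtain ⟨s, hs, rfl⟩ := ha
  have z : (0 : ℝ) ∈ Set.Icc 0 L := ⟨le_rfl, hL⟩
  have z' : L ∈ Set.Icc 0 L := ⟨hL, le_rfl⟩
  rw [hf _ z _ hs, hf _ hs _ z', hf _ z _ z', zero_sub, zero_sub, abs_neg, abs_neg,
    abs_of_nonneg hs.1, abs_of_nonneg hL, abs_sub_comm, abs_of_nonneg (by linarith [hs.2])]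
  ring

lemma IsGeodSegment.exists_point {S : Set X} {x y : X} (h : IsGeodSegment S x y) {t : ℝ}
    (h0 : 0 ≤ t) (ht : t ≤ dist x y) : ∃ v ∈ S, dist x v = t := by
  obtain ⟨f, L, hL, hf, rfl, rfl, rfl⟩ := h
  have z : (0 : ℝ) ∈ Set.Icc 0 L := ⟨le_rfl, hL⟩
  have z' : L ∈ Set.Icc 0 L := ⟨hL, le_rfl⟩
  rw [hf _ z _ z', zero_sub, abs_neg, abs_of_nonneg hL] at ht
  refine ⟨f t, ⟨t, ⟨h0, ht⟩, rfl⟩, ?_⟩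
  rw [hf _ z _ ⟨h0, ht⟩, zero_sub, abs_neg, abs_of_nonneg h0]

lemma IsGeodSegment.exists_sub {S : Set X} {x y a u : X} (h : IsGeodSegment S x y)
    (ha : a ∈ S) (hu : u ∈ S) : ∃ T ⊆ S, IsGeodSegment T a u := by
  obtain ⟨f, L, hL, hf, rfl, rfl, rfl⟩ := h
  have key : ∀ s ∈ Set.Icc 0 L, ∀ t ∈ Set.Icc 0 L, s ≤ t →
      ∃ T ⊆ f '' Set.Icc 0 L, IsGeodSegment T (f s) (f t) := by
    intro s hs t ht hst
    have hmem : ∀ v ∈ Set.Icc 0 (t - s), s + v ∈ Set.Icc 0 L := fun v hv =>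
      ⟨by linarith [hs.1, hv.1], by linarith [ht.2, hv.2]⟩
    refine ⟨(fun v => f (s + v)) '' Set.Icc 0 (t - s), ?_, fun v => f (s + v), t - s,
      by linarith, ?_, by simp, by simp, rfl⟩
    · rintro _ ⟨v, hv, rfl⟩
      exact ⟨s + v, hmem v hv, rfl⟩
    · intro v hv v' hv'
      have := hf _ (hmem v hv) _ (hmem v' hv')
      simpa using this
  obtain ⟨s, hs, rfl⟩ := ha
  obtain ⟨t, ht, rfl⟩ := hu
  rcases le_total s t with hst | hst
  · exact key s hs t ht hst
  · obtain ⟨T, hT, hT'⟩ := key t ht s hs hst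
    exact ⟨T, hT, hT'.symm⟩

end Segments

section Hyperbolic

variable {X : Type*} [MetricSpace X] {δ : ℝ}

/-- Thinness in pointwise form. The bound `2δ` replaces `δ` so that the infimum need not be
attained. -/
lemma ThinTriangles.exists_close (hδ : 0 < δ) (hX : ThinTriangles X δ) {x y z : X}
    {S₁ S₂ S₃ : Set X} (h₁ : IsGeodSegment S₁ x y) (h₂ : IsGeodSegment S₂ y z)
    (h₃ : IsGeodSegment S₃ x z) {p : X} (hp : p ∈ S₃) :
    (∃ v ∈ S₁, dist p v ≤ 2 * δ) ∨ (∃ v ∈ S₂, dist p v ≤ 2 * δ) := by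
  have h := hX x y z S₁ S₂ S₃ h₁ h₂ h₃ p hp
  have hne : (S₁ ∪ S₂).Nonempty := ⟨x, Or.inl h₁.left_mem⟩
  obtain ⟨v, hv, hd⟩ := (Metric.infDist_lt_iff hne).1 (show infDist p (S₁ ∪ S₂) < 2 * δ by linarith)
  rcases hv with hv | hv
  · exact Or.inl ⟨v, hv, hd.le⟩
  · exact Or.inr ⟨v, hv, hd.le⟩

/-- A path from `w` to a point of a geodesic nearly passes through the projection of `w`: a point
of `[a,u]` at distance `5δ` from `a` cannot be `2δ`-close to `[w,a]`, as `a` is nearest to `w`, so it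
is `2δ`-close to `[w,u]`. -/
lemma dist_ge_of_nearest (hδ : 0 < δ) (hG : GeodesicSpace X) (hX : ThinTriangles X δ)
    {S : Set X} {x y w a u : X} (hS : IsGeodSegment S x y) (ha : a ∈ nearestProj S w)
    (hu : u ∈ S) : dist w a + dist a u - 9 * δ ≤ dist w u := by
  have hmin : ∀ v ∈ S, dist w a ≤ dist w v := fun v hv => by
    rw [ha.2]
    exact Metric.infDist_le_dist_of_mem hv
  by_cases hlt : dist a u < 5 * δ
  · linarith [hmin u hu]
  obtain ⟨T, hTS, hT⟩ := hS.exists_sub ha.1 hu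
  obtain ⟨v, hv, hvd⟩ := hT.exists_point (t := 5 * δ) (by linarith) (by linarith)
  obtain ⟨A, hA⟩ := hG a w
  obtain ⟨B, hB⟩ := hG w u
  have hvu := hT.dist_add hv
  have hwv := hmin v (hTS hv)
  rcases hX.exists_close hδ hA hB hT hv with ⟨v', hv', hd⟩ | ⟨v', hv', hd⟩
  · have h1 := hA.dist_add hv'
    have h2 := dist_triangle w v' v
    have h3 := dist_triangle a v' v
    rw [dist_comm v' v] at h2 h3
    rw [dist_comm w v', dist_comm a w] at *
    linarith
  · have h1 := hB.dist_add hv'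
    have h2 := dist_triangle w v' v
    have h3 := dist_triangle v v' u
    rw [dist_comm v' v] at h2
    linarith

lemma exists_near (hδ : 0 < δ) (hG : GeodesicSpace X) (hX : ThinTriangles X δ) {E : ℝ}
    {S : Set X} {x y p : X} (hS : IsGeodSegment S x y)
    (hp : dist x p + dist p y ≤ dist x y + E) :
    ∃ p' ∈ S, dist p p' ≤ 4 * δ + E ∧ dist x p' ≤ dist x p ∧ dist x p - E ≤ dist x p' := by
  have hE : 0 ≤ E := by linarith [dist_triangle x p y]
  obtain ⟨p', hp', hd'⟩ := hS.exists_point (t := min (dist x p) (dist x y))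
    (le_min dist_nonneg dist_nonneg) (min_le_right _ _)
  have hle : dist x p' ≤ dist x p := hd' ▸ min_le_left _ _
  have hge : dist x p - E ≤ dist x p' := by
    rw [hd']
    refine le_min (by linarith) ?_
    linarith [dist_nonneg (x := p) (y := y)]
  refine ⟨p', hp', ?_, hle, hge⟩
  obtain ⟨A, hA⟩ := hG x p
  obtain ⟨B, hB⟩ := hG p y
  have h0 := hS.dist_add hp'
  rcases hX.exists_close hδ hA hB hS hp' with ⟨v, hv, hd⟩ | ⟨v, hv, hd⟩
  · have h1 := hA.dist_add hv
    have h2 := dist_triangle x v p'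
    have h3 := dist_triangle p v p'
    rw [dist_comm v p'] at h2 h3
    rw [dist_comm p v] at h3
    linarith
  · have h1 := hB.dist_add hv
    have h2 := dist_triangle p' v y
    have h3 := dist_triangle p v p'
    rw [dist_comm v p'] at h3
    linarith

/-- If `w` projects to `[x,y]` within `K` of `x`, and `p, q` are nearly in this order along `[x,y]`
with `p` at distance at least `K + E` from `x`, then `w` projects to `[p,q]` near `p`, with a bound independent
of `K`. -/
lemma near_endpoint (hδ : 0 < δ) (hG : GeodesicSpace X) (hX : ThinTriangles X δ) {E K : ℝ}
    {S T : Set X} {x y p q w b : X} (hS : IsGeodSegment S x y) (hT : IsGeodSegment T p q)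
    (hp : dist x p + dist p y ≤ dist x y + E) (hq : dist x q + dist q y ≤ dist x y + E)
    (hpq : dist x p + dist p q ≤ dist x q + E) (hK : K + E ≤ dist x p)
    (hal : AlignedIn K w S x) (hb : b ∈ nearestProj T w) :
    dist b p ≤ 13 * δ + 2 * E := by
  obtain ⟨a, haS, had⟩ := hS.isCompact.exists_infDist_eq_dist ⟨x, hS.left_mem⟩ w
  have ha : a ∈ nearestProj S w := ⟨haS, had.symm⟩
  have hbdd : Bornology.IsBounded (nearestProj S w ∪ {x}) :=
    hS.isCompact.isBounded.subset (Set.union_subset (fun _ h => h.1)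
      (Set.singleton_subset_iff.2 hS.left_mem))
  have hxa : dist x a < K :=
    lt_of_le_of_lt (Metric.dist_le_diam_of_mem hbdd (Or.inr rfl) (Or.inl ha)) hal
  obtain ⟨p', hp'S, hpp', hp1, hp2⟩ := exists_near hδ hG hX hS hp
  obtain ⟨q', hq'S, hqq', hq1, hq2⟩ := exists_near hδ hG hX hS hq
  have h1 := hS.dist_eq_sub haS hp'S (by linarith)
  have h2 := dist_ge_of_nearest hδ hG hX hS ha hq'S
  have h3 := dist_triangle x a q'
  have h4 := dist_triangle w a p'
  have h5 := dist_triangle_right w p p'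
  have h6 := dist_triangle w q q'
  have h7 := dist_ge_of_nearest hδ hG hX hT hb hT.left_mem
  have h8 := hT.dist_add hb.1
  have h9 := dist_triangle w b q
  rw [dist_comm p b] at h8
  linarith

lemma alignedIn_of_near {T : Set X} {w e : X} {D : ℝ} (hD : 0 ≤ D)
    (h : ∀ b ∈ nearestProj T w, dist b e ≤ D) : AlignedIn (2 * D + 1) w T e := by
  have h' : ∀ b ∈ nearestProj T w ∪ {e}, dist b e ≤ D := by
    rintro b (hb | rfl)
    · exact h b hb
    · simpa using hD
  refine lt_of_le_of_lt (Metric.diam_le_of_forall_dist_le (C := 2 * D) (by linarith) ?_)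
    (by linarith)
  intro b hb b' hb'
  linarith [dist_triangle_right b b' e, h' b hb, h' b' hb']

end Hyperbolic

/-- with a constant `C` depending only on `δ`, `c`, `d(x₀, γ 0)`,
for every `K > C` there is `N` such that `K`-alignment along `h·[x₀, g^{n+2N} x₀]`
forces `C`-alignment along `h·g^N·[x₀, g^n x₀]`. -/
theorem stmt12 :
    ∀ (δ c r : ℝ), 0 < δ → 0 ≤ c → 0 ≤ r →
    ∃ C : ℝ, 0 < C ∧
      ∀ (X : Type) [MetricSpace X] [ProperSpace X],
        GeodesicSpace X → ThinTriangles X δ →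
        ∀ (g : X ≃ᵢ X) (τ : ℝ), 0 < τ →
        ∀ (γ : ℝ → X), IsGeodesicOn γ Set.univ →
        ∀ (x₀ : X), dist x₀ (γ 0) = r →
        (∀ (k : ℤ) (t : ℝ), dist ((g ^ k) (γ t)) (γ (t + (k : ℝ) * τ)) ≤ c) →
        ∀ K : ℝ, C < K →
          ∃ N : ℕ, ∀ (h : X ≃ᵢ X) (n : ℕ) (S S' : Set X) (z : X),
            IsGeodSegment S x₀ ((g ^ (n + 2 * N)) x₀) →
            IsGeodSegment S' x₀ ((g ^ n) x₀) →
            AlignedIn K x₀ (⇑h '' S) (h x₀) →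
            AlignedIn K z (⇑h '' S) (h ((g ^ (n + 2 * N)) x₀)) →
            (AlignedIn C x₀ ((fun p => h ((g ^ N) p)) '' S') (h ((g ^ N) x₀)) ∧
             AlignedIn C z ((fun p => h ((g ^ N) p)) '' S')
               (h ((g ^ N) ((g ^ n) x₀)))) := by
  intro δ c r hδ hc hr
  -- `6 * (r + c)` bounds the error in an equality among three distances between orbit points,
  -- each of which is off by at most `2 * (r + c)`.
  refine ⟨2 * (13 * δ + 2 * (6 * (r + c))) + 1, by positivity, ?_⟩
  intro X _ _ hG hX g τ hτ γ hγ x₀ hx₀ hg K hK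
  obtain ⟨N, hN⟩ := exists_nat_ge ((K + 8 * (r + c)) / τ)
  rw [div_le_iff₀ hτ] at hN
  refine ⟨N, fun h n S S' z hS hS' hal₁ hal₂ => ?_⟩
  have hclose : ∀ k : ℕ, dist ((g ^ k) x₀) (γ (k * τ)) ≤ r + c := by
    intro k
    have h1 := hg k 0
    rw [zpow_natCast, zero_add, Int.cast_natCast] at h1
    have h2 := dist_triangle ((g ^ k) x₀) ((g ^ k) (γ 0)) (γ (k * τ))
    rw [(g ^ k).dist_eq, hx₀] at h2
    linarith
  have hdist : ∀ i j : ℕ, i ≤ j →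
      dist (h ((g ^ i) x₀)) (h ((g ^ j) x₀)) ≤ (j - i) * τ + 2 * (r + c) ∧
      (j - i) * τ - 2 * (r + c) ≤ dist (h ((g ^ i) x₀)) (h ((g ^ j) x₀)) := by
    intro i j hij
    rw [h.dist_eq]
    have hγd := hγ (i * τ) (Set.mem_univ _) (j * τ) (Set.mem_univ _)
    have hij' : (i : ℝ) ≤ j := by exact_mod_cast hij
    rw [abs_sub_comm, ← sub_mul, abs_of_nonneg (mul_nonneg (by linarith) hτ.le)] at hγd
    have hi := hclose i
    have hj := hclose j
    have t1 := dist_triangle4 ((g ^ i) x₀) (γ (i * τ)) (γ (j * τ)) ((g ^ j) x₀)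
    have t2 := dist_triangle4 (γ (i * τ)) ((g ^ i) x₀) ((g ^ j) x₀) (γ (j * τ))
    rw [dist_comm (γ (j * τ))] at t1
    rw [dist_comm (γ (i * τ)) ((g ^ i) x₀)] at t2
    constructor <;> linarith
  have hpow : (g ^ N) ((g ^ n) x₀) = (g ^ (N + n)) x₀ := by
    rw [pow_add, IsometryEquiv.mul_apply]
  have hT : IsGeodSegment ((fun p => h ((g ^ N) p)) '' S') (h ((g ^ N) x₀))
      (h ((g ^ N) ((g ^ n) x₀))) :=
    hS'.image (φ := fun p => h ((g ^ N) p)) (h.isometry.comp (g ^ N).isometry)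
  have hSh := hS.image h.isometry
  rw [hpow] at hT ⊢
  have d01 := hdist 0 N (by omega)
  have d02 := hdist 0 (N + n) (by omega)
  have d03 := hdist 0 (n + 2 * N) (by omega)
  have d12 := hdist N (N + n) (by omega)
  have d13 := hdist N (n + 2 * N) (by omega)
  have d23 := hdist (N + n) (n + 2 * N) (by omega)
  rw [pow_zero, IsometryEquiv.coe_one, id] at d01 d02 d03
  push_cast at d01 d02 d03 d12 d13 d23
  constructor
  · refine alignedIn_of_near (by positivity) fun b hb => ?_
    refine near_endpoint hδ hG hX hSh hT ?_ ?_ ?_ ?_ hal₁ hb <;> linarith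
  · refine alignedIn_of_near (by positivity) fun b hb => ?_
    refine near_endpoint hδ hG hX hSh.symm hT.symm ?_ ?_ ?_ ?_ hal₂ hb <;>
      simp only [dist_comm (h ((g ^ (n + 2 * N)) x₀)), dist_comm (h ((g ^ (N + n)) x₀)) (h ((g ^ N) x₀)),
        dist_comm (h ((g ^ (N + n)) x₀)) (h x₀), dist_comm (h ((g ^ N) x₀)) (h x₀)] <;>
      linarith
end
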